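/- Let k be an algebraically closed field, let V and V' be integral projective k-varieties with V normal (all local rings of V are integrally closed domains), and let φ : V' → V be a finite surjective morphism. Let d denote the separable degree of the function field extension k(V) ↪ k(V') induced by φ. Then for every point x of the underlying topological space of V, the fiber φ⁻¹(x) ⊆ V' contains at most d points. -/

import Mathlib

open AlgebraicGeometry CategoryTheory

universe u

/-- Projective `n`-space over `k`, realized as `Proj k[X₀, …, Xₙ]`. -/
noncomputable def ProjectiveSpace (k : Type u) [Field k] (n : ℕ) : Scheme.{u} :=
  letI := MvPolynomial.gradedAlgebra (σ := Fin (n + 1)) (R := k)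
  AlgebraicGeometry.Proj (MvPolynomial.homogeneousSubmodule (Fin (n + 1)) k)

/-- A scheme `V` with structure morphism `sV` to `Spec k` is projective over `k` if it admits a
closed immersion into some projective space over `k`, compatibly with the structure morphisms. -/
def IsProjectiveOver {k : Type u} [Field k] (V : Scheme.{u})
    (sV : V ⟶ Spec (CommRingCat.of k)) : Prop :=
  ∃ (n : ℕ) (ι : V ⟶ ProjectiveSpace k n) (p : ProjectiveSpace k n ⟶ Spec (CommRingCat.of k)),
    IsClosedImmersion ι ∧ ι ≫ p = sV

/-!
Over an affine open `Spec A` of `V` the statement is about a normal domain `A` and an integral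
extension `B` of domains, with fraction fields `K` and `L`: at most `[L : K]ₛ` primes of `B` lie
over a given prime of `A`. Fix a prime `Q`, over the given one, of the integral closure of `A` in an
algebraic closure of `L`. Each of the `[L : K]ₛ` many `K`-embeddings of `L` pulls `Q` back to a
prime of `B`, and every prime `P` arises in this way: by normality the minimal polynomial of `b ∈ P`
has coefficients in `A`, its constant term lies in `Q` and is up to sign a product of conjugates of
`b`, so some embedding sends `b` into `Q`. By prime avoidance one embedding works for all of `P`,
and incomparability turns the inclusion of `P` in the pullback of `Q` into an equality.
-/

section PrimesOver

open Polynomial nonZeroDivisors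

theorem exists_mem_roots_mem_of_coeff_zero_mem {R : Type*} [CommRing R] [IsDomain R] {Q : Ideal R}
    (hQ : Q.IsPrime) {p : R[X]} (hp : p.Splits) (hm : p.Monic) (h0 : p.coeff 0 ∈ Q) :
    ∃ r ∈ p.roots, r ∈ Q := by
  rw [hp.coeff_zero_eq_prod_roots_of_monic hm,
    Ideal.unit_mul_mem_iff_mem _ (isUnit_one.neg.pow _)] at h0
  exact (hQ.multiset_prod_mem_iff_exists_mem _).1 h0

theorem splits_map_integralClosure {A N : Type*} [CommRing A] [CommRing N] [IsDomain N]
    [Algebra A N] {p : A[X]} (hm : p.Monic) (hp : (p.map (algebraMap A N)).Splits) :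
    (p.map (algebraMap A (integralClosure A N))).Splits := by
  have hmap : (p.map (algebraMap A (integralClosure A N))).map
      (algebraMap (integralClosure A N) N) = p.map (algebraMap A N) := by
    rw [Polynomial.map_map, ← IsScalarTower.algebraMap_eq]
  refine Splits.of_splits_map_of_injective Subtype.val_injective (hmap ▸ hp) fun r hr ↦ ?_
  rw [hmap, mem_roots', IsRoot.def, Polynomial.eval_map] at hr
  exact ⟨⟨r, p, hm, hr.2⟩, rfl⟩

variable {A B K L N : Type*} [CommRing A] [CommRing B] [Field K] [Field L] [Field N]
  [Algebra A B] [Algebra A K] [Algebra B L] [Algebra A L] [Algebra K L] [Algebra A N] [Algebra K N]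
  [IsScalarTower A B L] [IsScalarTower A K L]

variable (A B K L) in
theorem finiteDimensional_of_isFractionRing [IsDomain A] [IsDomain B] [IsFractionRing A K]
    [IsFractionRing B L] [Module.Finite A B] : FiniteDimensional K L := by
  have := FaithfulSMul.of_field_isFractionRing A B K L
  exact .of_isLocalization A B A⁰

variable [IsScalarTower A K N] [Algebra.IsIntegral A B]

variable (A B) in
/-- The map from an integral `A`-algebra `B` over which `L` is an algebra to the integral closure of
`A` in `N` induced by a `K`-embedding `f` of `L` into `N`; primes are pulled back along it. -/
noncomputable def restrictToIntegralClosure (f : L →ₐ[K] N) : B →ₐ[A] integralClosure A N :=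
  ((f.restrictScalars A).comp (IsScalarTower.toAlgHom A B L)).codRestrict (integralClosure A N)
    fun b ↦ (Algebra.IsIntegral.isIntegral b).map _

variable [IsDomain A] [IsDomain B] [IsIntegrallyClosed A] [IsFractionRing A K]

section Conjugation

variable [IsAlgClosed N] [Algebra.IsAlgebraic K L]

theorem exists_restrictToIntegralClosure_mem {Q : Ideal (integralClosure A N)} (hQ : Q.IsPrime)
    {b : B} (hb : algebraMap A _ ((minpoly A b).coeff 0) ∈ Q) :
    ∃ f : L →ₐ[K] N, restrictToIntegralClosure A B f b ∈ Q := by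
  have hint : IsIntegral A b := Algebra.IsIntegral.isIntegral b
  have hmonic : (minpoly A b).Monic := minpoly.monic hint
  obtain ⟨r, hroot, hrQ⟩ := exists_mem_roots_mem_of_coeff_zero_mem hQ
    (splits_map_integralClosure hmonic (IsAlgClosed.splits _)) (hmonic.map _)
    (by rwa [coeff_map])
  have hr : aeval (r : N) (minpoly K (algebraMap B L b)) = 0 := by
    rw [minpoly.isIntegrallyClosed_eq_field_fractions K L hint, aeval_map_algebraMap,
      Subalgebra.aeval_coe, ← eval_map_algebraMap, (mem_roots'.1 hroot).2, Subalgebra.coe_zero]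
  obtain ⟨f, hf⟩ := IntermediateField.exists_algHom_of_splits_of_aeval
    (fun s : L ↦ ⟨Algebra.IsIntegral.isIntegral s, IsAlgClosed.splits _⟩) hr
  exact ⟨f, by rwa [Subtype.ext (a1 := restrictToIntegralClosure A B f b) hf]⟩

theorem exists_comap_restrictToIntegralClosure_eq [Finite (L →ₐ[K] N)] (p : Ideal A)
    (P : Ideal B) [P.IsPrime] [P.LiesOver p]
    (Q : Ideal (integralClosure A N)) [Q.IsPrime] [Q.LiesOver p] :
    ∃ f : L →ₐ[K] N, Q.comap (restrictToIntegralClosure A B f) = P := by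
  have hcover : (P : Set B) ⊆
      ⋃ f ∈ (Set.univ : Set (L →ₐ[K] N)), Q.comap (restrictToIntegralClosure A B f) := by
    intro b hb
    have hcoeff : (minpoly A b).coeff 0 ∈ p := by
      rw [P.over_def p]
      exact Ideal.coeff_zero_mem_comap_of_root_mem hb (minpoly.aeval A b)
    simpa using exists_restrictToIntegralClosure_mem ‹Q.IsPrime›
      ((Q.mem_of_liesOver p _).1 hcoeff)
  have f₀ : L →ₐ[K] N := IsAlgClosed.lift
  obtain ⟨f, -, hle⟩ := (Ideal.subset_union_prime_finite Set.finite_univ f₀ f₀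
    fun f _ _ _ ↦ Ideal.comap_isPrime (restrictToIntegralClosure A B f) Q).1 hcover
  have : (Q.comap (restrictToIntegralClosure A B f)).LiesOver p :=
    .of_eq_comap (Q := Q) p (restrictToIntegralClosure A B f) rfl
  refine ⟨f, (hle.eq_of_not_lt fun hlt ↦ ?_).symm⟩
  exact (Ideal.IsIntegral.comap_lt_comap (R := A) hlt).ne
    ((P.over_def p).symm.trans (Ideal.over_def _ p))

end Conjugation

variable (B K L) in
theorem finite_primesOver_and_ncard_le_finSepDegree [IsFractionRing B L] [Finite (Field.Emb K L)]
    (p : Ideal A) [p.IsPrime] :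
    (p.primesOver B).Finite ∧ (p.primesOver B).ncard ≤ Field.finSepDegree K L := by
  have := FaithfulSMul.of_field_isFractionRing A B K L
  have : Algebra.IsAlgebraic K L := isAlgebraic_of_isFractionRing A B K L
  have : FaithfulSMul A (AlgebraicClosure L) := FaithfulSMul.trans A K _
  obtain ⟨Q, _, _⟩ := Ideal.nonempty_primesOver (S := integralClosure A (AlgebraicClosure L)) p
  have hsub : p.primesOver B ⊆
      Set.range fun f : Field.Emb K L ↦ Q.comap (restrictToIntegralClosure A B f) :=
    fun P ⟨_, _⟩ ↦ exists_comap_restrictToIntegralClosure_eq p P Q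
  exact ⟨(Set.finite_range _).subset hsub,
    (Set.ncard_le_ncard hsub (Set.finite_range _)).trans (Finite.card_range_le _)⟩

end PrimesOver

section Opens

variable {X Y : Scheme.{u}}

theorem germ_eqToHom (U : Y.Opens) {x y : Y} (h : x = y) (hx : x ∈ U) :
    Y.presheaf.germ U x hx ≫ eqToHom (h ▸ rfl) = Y.presheaf.germ U y (h ▸ hx) := by
  subst h
  simp

theorem nonempty_preimage_of_isDominant (f : X ⟶ Y) [IsDominant f] (U : Y.Opens) [hU : Nonempty U] :
    Nonempty (f ⁻¹ᵁ U) := by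
  obtain ⟨x, hx⟩ := f.denseRange.exists_mem_open U.isOpen (Set.nonempty_coe_sort.1 hU)
  exact ⟨x, hx⟩

theorem isIntegrallyClosed_of_isAffineOpen [IsIntegral Y]
    (hY : ∀ y : Y, IsIntegrallyClosed (Y.presheaf.stalk y)) {U : Y.Opens} (hU : IsAffineOpen U)
    [Nonempty U] : IsIntegrallyClosed Γ(Y, U) := by
  refine .of_localization_maximal fun P _ hP ↦ ?_
  let y := hU.fromSpec ⟨P, hP.isPrime⟩
  have hy : y ∈ U := (hU.isoSpec.inv ⟨P, hP.isPrime⟩).2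
  let := TopCat.Presheaf.algebra_section_stalk Y.presheaf (⟨y, hy⟩ : U)
  have : IsLocalization.AtPrime (Y.presheaf.stalk y) P :=
    hU.isLocalization_stalk' ⟨P, hP.isPrime⟩ hy
  have := hY y
  exact .of_equiv (IsLocalization.algEquiv P.primeCompl
    (Y.presheaf.stalk y) (Localization.AtPrime P)).toRingEquiv

theorem preimage_singleton_subset_image_primesOver (f : X ⟶ Y) [IsAffineHom f] {U : Y.Opens}
    (hU : IsAffineOpen U) {y : Y} (hy : y ∈ U) [Algebra Γ(Y, U) Γ(X, f ⁻¹ᵁ U)]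
    (halg : algebraMap Γ(Y, U) Γ(X, f ⁻¹ᵁ U) = (f.app U).hom) :
    f ⁻¹' {y} ⊆ (hU.preimage f).fromSpec '' (PrimeSpectrum.asIdeal ⁻¹'
      (hU.primeIdealOf ⟨y, hy⟩).asIdeal.primesOver Γ(X, f ⁻¹ᵁ U)) := by
  rintro x rfl
  refine ⟨_, ⟨PrimeSpectrum.isPrime _, ⟨?_⟩⟩, (hU.preimage f).fromSpec_primeIdealOf ⟨x, hy⟩⟩
  have hcomap := IsAffineOpen.comap_primeIdealOf_appLE U hU _ (hU.preimage f) le_rfl hy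
  rw [← Scheme.Hom.app_eq_appLE] at hcomap
  rw [Ideal.under_def, halg]
  exact congrArg PrimeSpectrum.asIdeal hcomap.symm

theorem finite_preimage_singleton_and_ncard_le (f : X ⟶ Y) [IsAffineHom f] {U : Y.Opens}
    (hU : IsAffineOpen U) {y : Y} (hy : y ∈ U) [Algebra Γ(Y, U) Γ(X, f ⁻¹ᵁ U)]
    (halg : algebraMap Γ(Y, U) Γ(X, f ⁻¹ᵁ U) = (f.app U).hom)
    (hfin : ((hU.primeIdealOf ⟨y, hy⟩).asIdeal.primesOver Γ(X, f ⁻¹ᵁ U)).Finite) :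
    (f ⁻¹' {y}).Finite ∧ (f ⁻¹' {y}).ncard ≤
      ((hU.primeIdealOf ⟨y, hy⟩).asIdeal.primesOver Γ(X, f ⁻¹ᵁ U)).ncard := by
  have hinj : Function.Injective (PrimeSpectrum.asIdeal (R := Γ(X, f ⁻¹ᵁ U))) :=
    fun _ _ ↦ PrimeSpectrum.ext
  have hsub := preimage_singleton_subset_image_primesOver f hU hy halg
  have hpre := hfin.preimage (f := PrimeSpectrum.asIdeal) hinj.injOn
  refine ⟨(hpre.image _).subset hsub, (Set.ncard_le_ncard hsub (hpre.image _)).trans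
    ((Set.ncard_image_le hpre).trans ?_)⟩
  exact Set.ncard_le_ncard_of_injOn _ (fun _ h ↦ h) hinj.injOn hfin

end Opens

section FunctionField

variable {X Y : Scheme.{u}} [IsIntegral X] [IsIntegral Y] (f : X ⟶ Y) [IsDominant f]

theorem map_genericPoint_of_isDominant : f (genericPoint X) = genericPoint Y := by
  refine ((genericPoint_spec X).image f.continuous).eq ?_
  rw [Set.image_univ, f.denseRange.closure_range]
  exact genericPoint_spec Y

/-- The inclusion `k(Y) ↪ k(X)` of function fields induced by a dominant morphism `f : X ⟶ Y`,
as the map on stalks at the generic points. -/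
noncomputable def functionFieldMap : Y.functionField ⟶ X.functionField :=
  eqToHom (by rw [Scheme.functionField, map_genericPoint_of_isDominant f]) ≫
    f.stalkMap (genericPoint X)

theorem germToFunctionField_functionFieldMap (U : Y.Opens) [Nonempty U] [Nonempty (f ⁻¹ᵁ U)] :
    Y.germToFunctionField U ≫ functionFieldMap f =
      f.app U ≫ X.germToFunctionField (f ⁻¹ᵁ U) := by
  have hgen : genericPoint Y = f (genericPoint X) := (map_genericPoint_of_isDominant f).symm
  have hU : genericPoint Y ∈ U :=
    ((genericPoint_spec Y).mem_open_set_iff U.isOpen).2 (by simpa using ‹Nonempty U›)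
  calc Y.germToFunctionField U ≫ functionFieldMap f
    _ = (Y.presheaf.germ U _ hU ≫ eqToHom (hgen ▸ rfl)) ≫ f.stalkMap (genericPoint X) :=
      (Category.assoc _ _ _).symm
    _ = Y.presheaf.germ U _ (hgen ▸ hU) ≫ f.stalkMap (genericPoint X) := by
      rw [germ_eqToHom U hgen]
    _ = f.app U ≫ X.germToFunctionField (f ⁻¹ᵁ U) := f.germ_stalkMap U _ _

variable [Algebra Y.functionField X.functionField]

theorem algebraMap_functionField_comp
    (halg : algebraMap Y.functionField X.functionField = (functionFieldMap f).hom)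
    (U : Y.Opens) [Nonempty U] [Nonempty (f ⁻¹ᵁ U)] :
    (algebraMap Γ(X, f ⁻¹ᵁ U) X.functionField).comp (f.app U).hom =
      (algebraMap Y.functionField X.functionField).comp (algebraMap Γ(Y, U) Y.functionField) := by
  rw [halg]
  exact congrArg CommRingCat.Hom.hom (germToFunctionField_functionFieldMap f U).symm

theorem finiteDimensional_functionField [IsFinite f]
    (halg : algebraMap Y.functionField X.functionField = (functionFieldMap f).hom) :
    FiniteDimensional Y.functionField X.functionField := by
  obtain ⟨U, hU, hgen, -⟩ :=
    exists_isAffineOpen_mem_and_subset (TopologicalSpace.Opens.mem_top (genericPoint Y))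
  have : Nonempty U := ⟨_, hgen⟩
  have := nonempty_preimage_of_isDominant f U
  let : Algebra Γ(Y, U) Γ(X, f ⁻¹ᵁ U) := (f.app U).hom.toAlgebra
  let : Algebra Γ(Y, U) X.functionField :=
    ((algebraMap Γ(X, f ⁻¹ᵁ U) X.functionField).comp (f.app U).hom).toAlgebra
  have : IsScalarTower Γ(Y, U) Γ(X, f ⁻¹ᵁ U) X.functionField := .of_algebraMap_eq' rfl
  have : IsScalarTower Γ(Y, U) Y.functionField X.functionField :=
    .of_algebraMap_eq' (algebraMap_functionField_comp f halg U)
  have : Module.Finite Γ(Y, U) Γ(X, f ⁻¹ᵁ U) := f.finite_app U hU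
  have := functionField_isFractionRing_of_isAffineOpen Y U hU
  have := functionField_isFractionRing_of_isAffineOpen X _ (hU.preimage f)
  exact finiteDimensional_of_isFractionRing Γ(Y, U) Γ(X, f ⁻¹ᵁ U) _ _

theorem fiber_card_le_sepDegree_of_finite_surjective_general [IsIntegralHom f]
    (hY : ∀ y : Y, IsIntegrallyClosed (Y.presheaf.stalk y))
    (halg : algebraMap Y.functionField X.functionField = (functionFieldMap f).hom)
    [Finite (Field.Emb Y.functionField X.functionField)] (y : Y) :
    (f ⁻¹' {y}).Finite ∧
      (f ⁻¹' {y}).ncard ≤ Field.finSepDegree Y.functionField X.functionField := by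
  obtain ⟨U, hU, hyU, -⟩ := exists_isAffineOpen_mem_and_subset (TopologicalSpace.Opens.mem_top y)
  have : Nonempty U := ⟨y, hyU⟩
  have := nonempty_preimage_of_isDominant f U
  let : Algebra Γ(Y, U) Γ(X, f ⁻¹ᵁ U) := (f.app U).hom.toAlgebra
  let : Algebra Γ(Y, U) X.functionField :=
    ((algebraMap Γ(X, f ⁻¹ᵁ U) X.functionField).comp (f.app U).hom).toAlgebra
  have : IsScalarTower Γ(Y, U) Γ(X, f ⁻¹ᵁ U) X.functionField := .of_algebraMap_eq' rfl
  have : IsScalarTower Γ(Y, U) Y.functionField X.functionField :=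
    .of_algebraMap_eq' (algebraMap_functionField_comp f halg U)
  have : Algebra.IsIntegral Γ(Y, U) Γ(X, f ⁻¹ᵁ U) := ⟨f.isIntegral_app U hU⟩
  have := isIntegrallyClosed_of_isAffineOpen hY hU
  have := functionField_isFractionRing_of_isAffineOpen Y U hU
  have := functionField_isFractionRing_of_isAffineOpen X _ (hU.preimage f)
  obtain ⟨hfin, hcard⟩ := finite_primesOver_and_ncard_le_finSepDegree Γ(X, f ⁻¹ᵁ U)
    Y.functionField X.functionField (hU.primeIdealOf ⟨y, hyU⟩).asIdeal
  exact (finite_preimage_singleton_and_ncard_le f hU hyU rfl hfin).imp_right (·.trans hcard)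

end FunctionField

/-- Let `k` be an algebraically closed field, let `V` and `V'` be integral
projective `k`-varieties (separated `k`-schemes of finite type) with `V` normal, and let
`φ : V' → V` be a finite surjective morphism.  If `d` is the separable degree of the induced
function field extension `k(V) ↪ k(V')`, then every fiber of `φ` contains at most `d` points. -/
theorem fiber_card_le_sepDegree_of_finite_surjective
    {k : Type u} [Field k] [IsAlgClosed k]
    (V V' : Scheme.{u})
    (sV : V ⟶ Spec (CommRingCat.of k)) (sV' : V' ⟶ Spec (CommRingCat.of k))
    [IsIntegral V] [IsIntegral V']
    [IsSeparated sV] [LocallyOfFiniteType sV] [QuasiCompact sV]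
    [IsSeparated sV'] [LocallyOfFiniteType sV'] [QuasiCompact sV']
    (hVproj : IsProjectiveOver V sV) (hV'proj : IsProjectiveOver V' sV')
    (hVnormal : ∀ x : V, IsDomain (V.presheaf.stalk x) ∧
      IsIntegrallyClosed (V.presheaf.stalk x))
    (φ : V' ⟶ V) [IsFinite φ] [Surjective φ] (hφk : φ ≫ sV = sV') :
    -- the generic point of `V'` maps to the generic point of `V`, so that `φ` induces an
    -- extension of function fields `k(V) ↪ k(V')`
    have hgen : φ.base (genericPoint V') = genericPoint V := by
      refine ((genericPoint_spec V).eq ?_).symm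
      rw [isGenericPoint_def]
      apply Set.eq_univ_of_univ_subset
      have h1 : φ.base '' closure {genericPoint V'} ⊆ closure (φ.base '' {genericPoint V'}) :=
        image_closure_subset_closure_image (by fun_prop)
      rw [(genericPoint_spec V').def, Set.image_univ, Set.image_singleton] at h1
      exact (φ.surjective.range_eq ▸ h1 : Set.univ ⊆ _)
    letI : Algebra V.functionField V'.functionField :=
      ((eqToHom (by rw [hgen]) :
          V.functionField ⟶ V.presheaf.stalk (φ.base (genericPoint V'))) ≫
        φ.stalkMap (genericPoint V')).hom.toAlgebra
    ∀ x : V, (φ.base ⁻¹' {x}).Finite ∧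
      (φ.base ⁻¹' {x}).ncard ≤ Field.finSepDegree V.functionField V'.functionField := by
  intro _
  let := (functionFieldMap φ).hom.toAlgebra
  intro x
  have : FiniteDimensional V.functionField V'.functionField :=
    finiteDimensional_functionField φ rfl
  exact fiber_card_le_sepDegree_of_finite_surjective_general φ (fun v ↦ (hVnormal v).2) rfl x
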